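/- Let P be a Borel probability measure on ℝ with ∫ x² dP(x) < ∞, let a ∈ ℝ and σ² > 0, let X have law P, let Z ~ N(0, σ²) be independent of X, and set Y = aX + Z. For y ∈ ℝ and i ∈ {0,1,2} define μ_i(y) = ∫ x^i exp(−(y−ax)²/(2σ²)) dP(x), and let f(y) = μ₁(y)/μ₀(y) (the posterior-mean function, so that f(Y) = E[X | Y] almost surely). Then: (i) E[X f(Y)] = E[f(Y)²]; and (ii) f is differentiable on ℝ with f'(y) = (a/σ²)·(μ₂(y)/μ₀(y) − (μ₁(y)/μ₀(y))²), i.e., f'(y) equals a times the posterior variance of X given Y = y divided by σ². -/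

import Mathlib

open MeasureTheory ProbabilityTheory

/-- The Gaussian weight. -/
noncomputable def gw (a : ℝ) (v : NNReal) (y x : ℝ) : ℝ :=
  Real.exp (-(y - a * x) ^ 2 / (2 * (v : ℝ)))

lemma gw_pos (a : ℝ) (v : NNReal) (y x : ℝ) : 0 < gw a v y x := Real.exp_pos _

lemma gw_le (a : ℝ) (v : NNReal) (y x : ℝ) : gw a v y x ≤ 1 := by
  unfold gw
  apply Real.exp_le_one_iff.2
  have : 0 ≤ (y - a * x) ^ 2 / (2 * (v : ℝ)) := by positivity
  rw [neg_div]; linarith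

lemma gw_cont (a : ℝ) (v : NNReal) : Continuous (fun p : ℝ × ℝ => gw a v p.2 p.1) := by
  unfold gw; fun_prop

lemma gw_cont_x (a : ℝ) (v : NNReal) (y : ℝ) : Continuous (fun x : ℝ => gw a v y x) := by
  unfold gw; fun_prop

lemma int_mul_gw {P : Measure ℝ} (a : ℝ) (v : NNReal) (y : ℝ) {g : ℝ → ℝ}
    (hg : Integrable g P) : Integrable (fun x => g x * gw a v y x) P := by
  refine hg.norm.mono' (hg.aestronglyMeasurable.mul (gw_cont_x a v y).aestronglyMeasurable) ?_
  filter_upwards with x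
  rw [norm_mul, Real.norm_of_nonneg (gw_pos a v y x).le]
  exact mul_le_of_le_one_right (norm_nonneg _) (gw_le a v y x)

lemma gw_deriv (a : ℝ) (v : NNReal) (hv : 0 < v) (y x : ℝ) :
    HasDerivAt (fun y => gw a v y x) (gw a v y x * (-(y - a * x) / v)) y := by
  unfold gw
  have hv' : (v : ℝ) ≠ 0 := by exact_mod_cast hv.ne'
  have h1 : HasDerivAt (fun y : ℝ => -(y - a * x) ^ 2 / (2 * (v : ℝ))) (-(y - a * x) / v) y := by
    have := ((((hasDerivAt_id y).sub_const (a * x)).pow 2).neg).div_const (2 * (v : ℝ))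
    refine this.congr_deriv ?_
    simp; field_simp; ring
  exact h1.exp

lemma int_pow {P : Measure ℝ} [IsProbabilityMeasure P]
    (hP2 : Integrable (fun x => x ^ 2) P) : ∀ i ≤ 2, Integrable (fun x : ℝ => x ^ i) P := by
  intro i hi
  refine (hP2.add (integrable_const (1:ℝ))).mono' (by fun_prop) ?_
  filter_upwards with x
  simp only [Pi.add_apply]
  interval_cases i
  · simp; positivity
  · simp [abs_le]; constructor <;> nlinarith [sq_nonneg (x-1), sq_nonneg (x+1)]
  · simp

lemma mu_deriv {P : Measure ℝ} [IsProbabilityMeasure P]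
    (hP2 : Integrable (fun x => x ^ 2) P) (a : ℝ) (v : NNReal) (hv : 0 < v) (i : ℕ) (hi : i ≤ 1)
    (y : ℝ) : HasDerivAt (fun y => ∫ x, x ^ i * gw a v y x ∂P)
      ((a * (∫ x, x ^ (i+1) * gw a v y x ∂P) - y * ∫ x, x ^ i * gw a v y x ∂P) / v) y := by
  have hv' : (0:ℝ) < v := by exact_mod_cast hv
  have hI0 := int_pow hP2 i (by omega)
  have hI1 := int_pow hP2 (i+1) (by omega)
  have key := hasDerivAt_integral_of_dominated_loc_of_deriv_le (μ := P)
    (F := fun y x => x ^ i * gw a v y x)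
    (F' := fun y x => x ^ i * (gw a v y x * (-(y - a * x) / v))) (x₀ := y)
    (bound := fun x => (|y| + 1) / v * ‖x ^ i‖ + |a| / v * ‖x ^ (i+1)‖)
    (s := Metric.ball y 1) (Metric.ball_mem_nhds y one_pos)
    (by
      filter_upwards with z
      exact (int_mul_gw a v z hI0).aestronglyMeasurable)
    (int_mul_gw a v y hI0)
    (by
      have := gw_cont_x a v y
      exact Continuous.aestronglyMeasurable (by fun_prop))
    (by
      filter_upwards with x z hz
      have hz1 : |z| ≤ |y| + 1 := by
        rw [Metric.mem_ball, Real.dist_eq] at hz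
        have := abs_sub_abs_le_abs_sub z y
        linarith
      have h2 : |-(z - a * x) / (v:ℝ)| ≤ (|y| + 1 + |a| * |x|) / v := by
        rw [abs_div, abs_neg, abs_of_pos hv']
        gcongr
        calc |z - a * x| ≤ |z| + |a * x| := abs_sub _ _
          _ ≤ _ := by rw [abs_mul]; gcongr
      rw [norm_mul, norm_mul, Real.norm_of_nonneg (gw_pos a v z x).le, Real.norm_eq_abs (_ / _)]
      calc ‖x ^ i‖ * (gw a v z x * |-(z - a * x) / (v:ℝ)|)
          ≤ ‖x ^ i‖ * (1 * ((|y| + 1 + |a| * |x|) / v)) := by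
            gcongr
            exact gw_le a v z x
        _ = _ := by
            rw [pow_succ, norm_mul, Real.norm_eq_abs x]; ring)
    ((hI0.norm.const_mul _).add (hI1.norm.const_mul _))
    (by
      filter_upwards with x z hz
      exact (gw_deriv a v hv z x).const_mul _)
  refine key.2.congr_deriv ?_
  rw [← integral_const_mul, ← integral_const_mul, ← integral_sub, ← integral_div]
  · congr 1; ext x; ring
  · exact (int_mul_gw a v y hI1).const_mul _
  · exact (int_mul_gw a v y hI0).const_mul _

lemma mu0_pos {P : Measure ℝ} [IsProbabilityMeasure P] (a : ℝ) (v : NNReal) (y : ℝ) :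
    0 < ∫ x, x ^ 0 * gw a v y x ∂P := by
  have h := int_mul_gw (P := P) a v y (integrable_const (1:ℝ))
  simp only [pow_zero]
  refine (integral_pos_iff_support_of_nonneg (fun x => by simpa using (gw_pos a v y x).le) h).2 ?_
  have : Function.support (fun x => 1 * gw a v y x) = Set.univ := by
    ext x; simp [(gw_pos a v y x).ne']
  rw [this]; simp

lemma joint {Ω : Type*} [MeasureSpace Ω] [IsProbabilityMeasure (ℙ : Measure Ω)]
    (P : Measure ℝ) [IsProbabilityMeasure P]
    (a : ℝ) (v : NNReal) (hv : 0 < v)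
    (X Z : Ω → ℝ) (hXm : Measurable X) (hZm : Measurable Z)
    (hXlaw : Measure.map X ℙ = P)
    (hZlaw : Measure.map Z ℙ = gaussianReal 0 v)
    (hindep : IndepFun X Z) (k : ℝ × ℝ → ℝ) (hk : Measurable k) :
    ∫ ω, k (X ω, a * X ω + Z ω) =
      (√(2 * Real.pi * v))⁻¹ * ∫ p, k p * gw a v p.2 p.1 ∂(P.prod volume) := by
  have hmap : Measure.map (fun ω => (X ω, Z ω)) ℙ = P.prod (gaussianReal 0 v) := by
    rw [(indepFun_iff_map_prod_eq_prod_map_map hXm.aemeasurable hZm.aemeasurable).1 hindep,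
      hXlaw, hZlaw]
  have hT : MeasurePreserving (fun p : ℝ × ℝ => (p.1, a * p.1 + p.2))
      (P.prod volume) (P.prod volume) := by
    refine MeasurePreserving.skew_product (f := id) (g := fun x z => a * x + z)
      (MeasurePreserving.id P) (by fun_prop) ?_
    filter_upwards with x
    exact (measurePreserving_add_left volume (a * x)).map_eq
  have hw := (gw_cont a v).measurable
  calc ∫ ω, k (X ω, a * X ω + Z ω)
      = ∫ p, k (p.1, a * p.1 + p.2) ∂(Measure.map (fun ω => (X ω, Z ω)) ℙ) := by
        rw [integral_map (by fun_prop)]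
        exact (hk.comp (by fun_prop)).aestronglyMeasurable
    _ = ∫ p, (gaussianPDFReal 0 v p.2) * k (p.1, a * p.1 + p.2) ∂(P.prod volume) := by
        rw [hmap, gaussianReal_of_var_ne_zero 0 hv.ne',
          prod_withDensity_right (measurable_gaussianPDF 0 v),
          integral_withDensity_eq_integral_toReal_smul]
        · simp [toReal_gaussianPDF]
        · exact (measurable_gaussianPDF 0 v).comp measurable_snd
        · filter_upwards with p
          exact gaussianPDF_lt_top
    _ = ∫ p, (√(2 * Real.pi * v))⁻¹ * (k (p.1, a * p.1 + p.2) *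
          gw a v (a * p.1 + p.2) p.1) ∂(P.prod volume) := by
        congr 1; ext p
        simp only [gaussianPDFReal, gw]
        ring_nf
    _ = _ := by
        rw [integral_const_mul]
        congr 1
        conv_rhs => rw [← hT.map_eq]
        rw [integral_map hT.measurable.aemeasurable]
        exact (hk.mul hw).aestronglyMeasurable

lemma int_gw_y (a : ℝ) (v : NNReal) (hv : 0 < v) (x : ℝ) :
    Integrable (fun y => gw a v y x) ∧ ∫ y, gw a v y x = √(2 * Real.pi * v) := by
  have hv' : (0:ℝ) < v := by exact_mod_cast hv
  have hc : (√(2 * Real.pi * v)) ≠ 0 := by positivity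
  have e : (fun y => gw a v y x) =
      fun y => √(2 * Real.pi * v) * gaussianPDFReal (a * x) v y := by
    ext y
    simp only [gw, gaussianPDFReal]
    field_simp
  rw [e]
  refine ⟨(integrable_gaussianPDFReal _ _).const_mul _, ?_⟩
  rw [integral_const_mul, integral_gaussianPDFReal_eq_one _ hv.ne', mul_one]

lemma fubini_part (P : Measure ℝ) [IsProbabilityMeasure P]
    (hP2 : Integrable (fun x => x ^ 2) P)
    (a : ℝ) (v : NNReal) (hv : 0 < v) (f : ℝ → ℝ) (hfm : Measurable f)
    (hf : ∀ y, f y = (∫ x, x ^ 1 * gw a v y x ∂P) / (∫ x, x ^ 0 * gw a v y x ∂P)) :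
    ∫ p, (p.1 * f p.2) * gw a v p.2 p.1 ∂(P.prod volume) =
      ∫ p, (f p.2 ^ 2) * gw a v p.2 p.1 ∂(P.prod volume) := by
  have hw := (gw_cont a v).measurable
  have hf' : ∀ y, f y * (∫ x, x ^ 0 * gw a v y x ∂P) = ∫ x, x ^ 1 * gw a v y x ∂P := by
    intro y
    rw [hf y]; exact div_mul_cancel₀ _ (mu0_pos a v y).ne'
  have i0 := fun y => int_mul_gw a v y (int_pow hP2 0 (by norm_num))
  have i1 := fun y => int_mul_gw a v y (int_pow hP2 1 (by norm_num))
  have i2 := fun y => int_mul_gw a v y (int_pow hP2 2 (by norm_num))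
  have cs : ∀ y, f y ^ 2 * (∫ x, x ^ 0 * gw a v y x ∂P) ≤ ∫ x, x ^ 2 * gw a v y x ∂P := by
    intro y
    have h0 : 0 ≤ ∫ x, (x - f y) ^ 2 * gw a v y x ∂P :=
      integral_nonneg fun x => mul_nonneg (sq_nonneg _) (gw_pos a v y x).le
    have h1 : ∫ x, (x - f y) ^ 2 * gw a v y x ∂P = (∫ x, x ^ 2 * gw a v y x ∂P)
        - 2 * f y * (∫ x, x ^ 1 * gw a v y x ∂P) + f y ^ 2 * (∫ x, x ^ 0 * gw a v y x ∂P) := by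
      rw [← integral_const_mul, ← integral_const_mul, ← integral_sub (i2 y) ((i1 y).const_mul _),
        ← integral_add]
      · congr 1; ext x; ring
      · exact (i2 y).sub ((i1 y).const_mul _)
      · exact (i0 y).const_mul _
    have h2 := hf' y
    rw [← h2] at h1
    nlinarith
  have hF : Integrable (fun p : ℝ × ℝ => p.1 ^ 2 * gw a v p.2 p.1) (P.prod volume) := by
    rw [integrable_prod_iff (by fun_prop)]
    constructor
    · filter_upwards with x
      exact (int_gw_y a v hv x).1.const_mul _
    · have : (fun x => ∫ y, ‖x ^ 2 * gw a v y x‖) = fun x => x ^ 2 * √(2 * Real.pi * v) := by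
        ext x
        rw [← (int_gw_y a v hv x).2, ← integral_const_mul]
        congr 1; ext y
        exact Real.norm_of_nonneg (mul_nonneg (sq_nonneg _) (gw_pos a v y x).le)
      simp only [this]
      exact hP2.mul_const _
  have hG : Integrable (fun p : ℝ × ℝ => f p.2 ^ 2 * gw a v p.2 p.1) (P.prod volume) := by
    rw [integrable_prod_iff' (by fun_prop)]
    constructor
    · filter_upwards with y
      exact int_mul_gw a v y (integrable_const (f y ^ 2))
    · have : (fun y => ∫ x, ‖f y ^ 2 * gw a v y x‖ ∂P) =
          fun y => f y ^ 2 * (∫ x, x ^ 0 * gw a v y x ∂P) := by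
        ext y
        rw [← integral_const_mul]
        congr 1; ext x
        rw [Real.norm_of_nonneg (mul_nonneg (sq_nonneg _) (gw_pos a v y x).le)]; ring
      have hm : AEStronglyMeasurable (fun y => ∫ x, ‖f y ^ 2 * gw a v y x‖ ∂P) volume := by
        have : StronglyMeasurable (fun p : ℝ × ℝ => ‖f p.2 ^ 2 * gw a v p.2 p.1‖) :=
          Measurable.stronglyMeasurable (by fun_prop)
        exact this.integral_prod_left'.aestronglyMeasurable
      refine hF.integral_prod_right.mono' hm ?_
      filter_upwards with y
      rw [congrFun this y, Real.norm_of_nonneg (mul_nonneg (sq_nonneg _) (mu0_pos a v y).le)]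
      exact cs y
  have hH : Integrable (fun p : ℝ × ℝ => (p.1 * f p.2) * gw a v p.2 p.1) (P.prod volume) := by
    refine (hF.add hG).mono' (by fun_prop) ?_
    filter_upwards with p
    simp only [Pi.add_apply]
    rw [norm_mul, Real.norm_of_nonneg (gw_pos a v _ _).le, ← add_mul]
    refine mul_le_mul_of_nonneg_right ?_ (gw_pos a v _ _).le
    rw [Real.norm_eq_abs, abs_le]
    constructor <;> nlinarith [sq_nonneg (p.1 - f p.2), sq_nonneg (p.1 + f p.2)]
  rw [integral_prod_symm _ hH, integral_prod_symm _ hG]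
  congr 1; ext y
  have e1 : ∫ x, (x * f y) * gw a v y x ∂P = f y * ∫ x, x ^ 1 * gw a v y x ∂P := by
    rw [← integral_const_mul]; congr 1; ext x; ring
  have e2 : ∫ x, (f y ^ 2) * gw a v y x ∂P = f y ^ 2 * ∫ x, x ^ 0 * gw a v y x ∂P := by
    rw [← integral_const_mul]; congr 1; ext x; ring
  simp only [e1, e2]
  rw [← hf' y]; ring

/-- Posterior mean for the Gaussian channel `Y = aX + Z`,
`Z ~ N(0, σ²)` independent of `X ~ P`, with `∫ x² dP < ∞`.  With
`μ_i(y) = ∫ x^i exp(−(y−ax)²/(2σ²)) dP(x)` and `f = μ₁/μ₀` (the posterior-mean function):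
(i) `E[X f(Y)] = E[f(Y)²]`; (ii) `f` is differentiable with
`f'(y) = (a/σ²)(μ₂(y)/μ₀(y) − (μ₁(y)/μ₀(y))²)`. -/
theorem posterior_mean_gaussian_channel
    {Ω : Type*} [MeasureSpace Ω] [IsProbabilityMeasure (ℙ : Measure Ω)]
    (P : Measure ℝ) [IsProbabilityMeasure P]
    (hP2 : Integrable (fun x => x ^ 2) P)
    (a : ℝ) (v : NNReal) (hv : 0 < v)
    (X Z : Ω → ℝ) (hXm : Measurable X) (hZm : Measurable Z)
    (hXlaw : Measure.map X ℙ = P)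
    (hZlaw : Measure.map Z ℙ = gaussianReal 0 v)
    (hindep : IndepFun X Z)
    (Y : Ω → ℝ) (hY : Y = fun ω => a * X ω + Z ω)
    (μ : ℕ → ℝ → ℝ)
    (hμ : ∀ i y, μ i y = ∫ x, x ^ i * Real.exp (-(y - a * x) ^ 2 / (2 * (v : ℝ))) ∂P)
    (f : ℝ → ℝ) (hf : ∀ y, f y = μ 1 y / μ 0 y) :
    (∫ ω, X ω * f (Y ω)) = (∫ ω, f (Y ω) ^ 2) ∧
      ∀ y : ℝ,
        HasDerivAt f ((a / (v : ℝ)) * (μ 2 y / μ 0 y - (μ 1 y / μ 0 y) ^ 2)) y := by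
  have hv' : (v : ℝ) ≠ 0 := by exact_mod_cast hv.ne'
  have hμ' : ∀ i, μ i = fun y => ∫ x, x ^ i * gw a v y x ∂P := fun i => funext fun y => hμ i y
  have hpos : ∀ y, μ 0 y ≠ 0 := fun y => by
    rw [hμ' 0]; exact (mu0_pos a v y).ne'
  have hd : ∀ y : ℝ,
      HasDerivAt f ((a / (v : ℝ)) * (μ 2 y / μ 0 y - (μ 1 y / μ 0 y) ^ 2)) y := by
    intro y
    have h0 := mu_deriv hP2 a v hv 0 (by norm_num) y
    have h1 := mu_deriv hP2 a v hv 1 (by norm_num) y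
    rw [← hμ' 0] at h0
    rw [← hμ' 1] at h1
    have h := h1.fun_div h0 (hpos y)
    rw [← funext hf] at h
    refine h.congr_deriv ?_
    have e0 := congrFun (hμ' 0) y
    have e1 := congrFun (hμ' 1) y
    have e2 := congrFun (hμ' 2) y
    simp only [Nat.reduceAdd, zero_add] at e0 e1 e2 ⊢
    rw [← e0, ← e1, ← e2]
    have := hpos y
    field_simp
    ring
  refine ⟨?_, hd⟩
  have hfm : Measurable f :=
    (continuous_iff_continuousAt.2 fun y => (hd y).continuousAt).measurable
  subst hY
  have j1 := joint P a v hv X Z hXm hZm hXlaw hZlaw hindep (fun p => p.1 * f p.2) (by fun_prop)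
  have j2 := joint P a v hv X Z hXm hZm hXlaw hZlaw hindep (fun p => f p.2 ^ 2) (by fun_prop)
  simp only at j1 j2
  rw [j1, j2, fubini_part P hP2 a v hv f hfm (fun y => by rw [hf y, hμ' 1, hμ' 0])]
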